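/- Define, for s > 0 and x ∈ ℝ, (√𝔇 q_s)(x) = ∫_ℝ |θ|^{1/2}·e^{−4π²sθ²}·e^{2πixθ} dθ (a real number). For every λ > 0 there exists C > 0 such that for all δ ∈ (0,1/2] and all y ∈ ℝ, ∫_0^1 ∫_ℝ e^{−λ|z|}·|(√𝔇 q_{s+δ²})(y−z)|² dz ds ≤ C·log(1/δ)·(1+y²)^{−3/2}. -/

import Mathlib

open MeasureTheory

/-- The `1/2`-fractional derivative of the heat kernel `q_s`, defined via the Fourier
multiplier with symbol `|θ|^{1/2}` (a real number). -/
noncomputable def sqrtDheat (s x : ℝ) : ℝ :=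
  (∫ θ : ℝ, ((|θ| ^ ((1:ℝ)/2) * Real.exp (-4 * Real.pi ^ 2 * s * θ ^ 2) : ℝ) : ℂ) *
      Complex.exp ((2 * Real.pi * x * θ : ℝ) * Complex.I)).re

/-!
On `(0, ∞)` the multiplier `θ ^ (1/2) * exp (-4π²sθ²)` is a symbol of order `1/2`, uniformly in `s`,
so two integrations by parts make its cosine transform `O(|x| ^ (-3/2))`; bounding the cosine by `1`
gives `O(s ^ (-3/4))`. Together, `|√𝔇 q_s(x)|² ≲ (√s + |x|) ^ (-3)`. Integrating this over `z`
against `e^{-λ|z|}` preserves the decay `⟨y⟩ ^ (-3)` at the cost of a factor `1 + 1/s`, the second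
term being the mass of `(√s + |·|) ^ (-3)`. For `s + δ²` in place of `s`, that factor integrates
over `[0, 1]` to a multiple of `log (1/δ)`.
-/

open Filter Set Topology

lemma integrable_comp_abs {f : ℝ → ℝ} (hf : IntegrableOn f (Ioi 0)) :
    Integrable fun x => f |x| := by
  have hpos : IntegrableOn (fun x => f |x|) (Ioi 0) :=
    hf.congr_fun (fun x hx => by rw [abs_of_pos hx.out]) measurableSet_Ioi
  have hneg : IntegrableOn (fun x => f |x|) (Iic 0) := by
    rw [integrableOn_Iic_iff_integrableOn_Iio]
    simpa only [Function.comp_def, abs_neg, neg_preimage, neg_Ioi, neg_zero] using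
      ((Measure.measurePreserving_neg volume).integrableOn_comp_preimage
        (Homeomorph.neg ℝ).measurableEmbedding).2 hpos
  rw [← integrableOn_univ, ← Iic_union_Ioi (a := (0 : ℝ))]
  exact hneg.union hpos

lemma add_rpow_le_two_rpow_mul_rpow_add_rpow {a b p : ℝ} (ha : 0 ≤ a) (hb : 0 ≤ b) (hp : 0 ≤ p) :
    (a + b) ^ p ≤ 2 ^ p * (a ^ p + b ^ p) := by
  wlog hab : a ≤ b generalizing a b
  · simpa only [add_comm] using this hb ha (le_of_not_ge hab)
  calc (a + b) ^ p ≤ (2 * b) ^ p := by gcongr; linarith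
    _ = 2 ^ p * b ^ p := Real.mul_rpow zero_le_two hb
    _ ≤ 2 ^ p * (a ^ p + b ^ p) := by gcongr; exact le_add_of_nonneg_left (by positivity)

/-- `f` is a symbol of order `α` on `(0, ∞)` with constant `A`, up to two derivatives: `f'` and
`f''` are its first and second derivative, and `|f^{(k)}(θ)| ≤ A θ ^ (α - k)` for `k ≤ 2`. -/
structure IsSymbolOfOrder (α A : ℝ) (f f' f'' : ℝ → ℝ) : Prop where
  hasDerivAt : ∀ θ > 0, HasDerivAt f (f' θ) θ
  hasDerivAt_deriv : ∀ θ > 0, HasDerivAt f' (f'' θ) θ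
  abs_le : ∀ θ > 0, |f θ| ≤ A * θ ^ α
  abs_deriv_le : ∀ θ > 0, |f' θ| ≤ A * θ ^ (α - 1)
  abs_deriv2_le : ∀ θ > 0, |f'' θ| ≤ A * θ ^ (α - 2)

namespace IsSymbolOfOrder

variable {α A c ω : ℝ} {f f' f'' : ℝ → ℝ}

lemma norm_deriv2_mul_cos_le (h : IsSymbolOfOrder α A f f' f'') {θ : ℝ} (hθ : 0 < θ) (x : ℝ) :
    ‖f'' θ * Real.cos x‖ ≤ A * θ ^ (α - 2) :=
  (norm_mul_le _ _).trans <|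
    (mul_le_of_le_one_right (norm_nonneg _) (Real.abs_cos_le_one x)).trans (h.abs_deriv2_le θ hθ)

lemma integrableOn_Ioi_deriv2_mul_cos (h : IsSymbolOfOrder α A f f' f'') (hα : α < 1)
    (hc : 0 < c) (ω : ℝ) : IntegrableOn (fun θ => f'' θ * Real.cos (ω * θ)) (Ioi c) := by
  have hmeas : AEStronglyMeasurable f'' (volume.restrict (Ioi c)) :=
    (measurable_deriv f').aestronglyMeasurable.congr <|
      (ae_restrict_mem measurableSet_Ioi).mono fun θ hθ =>
        (h.hasDerivAt_deriv θ (hc.trans hθ)).deriv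
  refine ((integrableOn_Ioi_rpow_of_lt (a := α - 2) (by linarith) hc).const_mul A).mono'
    (hmeas.mul (by fun_prop)) ?_
  filter_upwards [ae_restrict_mem measurableSet_Ioi] with θ hθ
  exact h.norm_deriv2_mul_cos_le (hc.trans hθ) _

lemma abs_integral_Ioi_deriv2_mul_cos_le (h : IsSymbolOfOrder α A f f' f'') (hα : α < 1)
    (hc : 0 < c) (ω : ℝ) :
    |∫ θ in Ioi c, f'' θ * Real.cos (ω * θ)| ≤ A * (c ^ (α - 1) / (1 - α)) := by
  rw [← Real.norm_eq_abs]
  refine (norm_integral_le_of_norm_le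
    ((integrableOn_Ioi_rpow_of_lt (a := α - 2) (by linarith) hc).const_mul A)
    ((ae_restrict_mem measurableSet_Ioi).mono fun θ hθ =>
      h.norm_deriv2_mul_cos_le (hc.trans hθ) _)).trans_eq ?_
  rw [integral_const_mul, integral_Ioi_rpow_of_lt (a := α - 2) (by linarith) hc,
    show α - 2 + 1 = -(1 - α) by ring, neg_div_neg_eq, neg_sub]

lemma abs_integral_Ioc_mul_cos_le (h : IsSymbolOfOrder α A f f' f'') (hα : -1 < α) (hc : 0 ≤ c)
    (ω : ℝ) : |∫ θ in Ioc 0 c, f θ * Real.cos (ω * θ)| ≤ A * (c ^ (α + 1) / (α + 1)) := by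
  rw [← Real.norm_eq_abs]
  have hpow : IntegrableOn (fun θ : ℝ => θ ^ α) (Ioc 0 c) :=
    (intervalIntegrable_iff_integrableOn_Ioc_of_le hc).1
      (intervalIntegral.intervalIntegrable_rpow' hα)
  refine (norm_integral_le_of_norm_le (hpow.const_mul A)
    ((ae_restrict_mem measurableSet_Ioc).mono fun θ hθ => ?_)).trans_eq ?_
  · exact (norm_mul_le _ _).trans <|
      (mul_le_of_le_one_right (norm_nonneg _) (Real.abs_cos_le_one _)).trans (h.abs_le θ hθ.1)
  · rw [integral_const_mul, ← intervalIntegral.integral_of_le hc, integral_rpow (.inl hα),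
      Real.zero_rpow (by linarith), sub_zero]

lemma tendsto_deriv_atTop_zero (h : IsSymbolOfOrder α A f f' f'') (hα : α < 1) :
    Tendsto f' atTop (𝓝 0) := by
  have hpow : Tendsto (fun θ : ℝ => A * θ ^ (α - 1)) atTop (𝓝 0) := by
    simpa using (tendsto_rpow_neg_atTop (sub_pos.2 hα)).const_mul A
  exact squeeze_zero_norm' ((eventually_gt_atTop 0).mono h.abs_deriv_le) hpow

-- Integrating by parts twice leaves `f''`, which is integrable at infinity since `α - 2 < -1`.
lemma integral_Ioi_mul_cos_eq (h : IsSymbolOfOrder α A f f' f'') (hα : α < 1)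
    (hint : IntegrableOn f (Ioi 0)) (hlim : Tendsto f atTop (𝓝 0)) (hω : ω ≠ 0) (hc : 0 < c) :
    ∫ θ in Ioi c, f θ * Real.cos (ω * θ) =
      -(ω⁻¹ * (f c * Real.sin (ω * c)) + (ω ^ 2)⁻¹ * (f' c * Real.cos (ω * c)))
        - (ω ^ 2)⁻¹ * ∫ θ in Ioi c, f'' θ * Real.cos (ω * θ) := by
  have hint₂ := (h.integrableOn_Ioi_deriv2_mul_cos hα hc ω).const_mul (ω ^ 2)⁻¹
  have hint₀ : IntegrableOn (fun θ => f θ * Real.cos (ω * θ)) (Ioi c) :=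
    (hint.mono_set (Ioi_subset_Ioi hc.le)).mul_bdd (c := 1) (by fun_prop)
      (ae_of_all _ fun θ => Real.abs_cos_le_one _)
  have hderiv : ∀ θ ∈ Ici c, HasDerivAt
      (fun θ => ω⁻¹ * (f θ * Real.sin (ω * θ)) + (ω ^ 2)⁻¹ * (f' θ * Real.cos (ω * θ)))
      (f θ * Real.cos (ω * θ) + (ω ^ 2)⁻¹ * (f'' θ * Real.cos (ω * θ))) θ := by
    intro θ hθ
    have hθ₀ : 0 < θ := hc.trans_le hθ
    have hphase := (hasDerivAt_id' θ).const_mul ω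
    refine ((((h.hasDerivAt θ hθ₀).mul hphase.sin).const_mul ω⁻¹).add
      (((h.hasDerivAt_deriv θ hθ₀).mul hphase.cos).const_mul (ω ^ 2)⁻¹)).congr_deriv ?_
    field_simp
    ring
  have hlim₀ : Tendsto (fun θ =>
      ω⁻¹ * (f θ * Real.sin (ω * θ)) + (ω ^ 2)⁻¹ * (f' θ * Real.cos (ω * θ))) atTop (𝓝 0) := by
    have hsin := hlim.zero_mul_isBoundedUnder_le (g := fun θ => Real.sin (ω * θ))
      (isBoundedUnder_of ⟨1, fun θ => Real.abs_sin_le_one _⟩)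
    have hcos := (h.tendsto_deriv_atTop_zero hα).zero_mul_isBoundedUnder_le
      (g := fun θ => Real.cos (ω * θ)) (isBoundedUnder_of ⟨1, fun θ => Real.abs_cos_le_one _⟩)
    simpa using (hsin.const_mul ω⁻¹).add (hcos.const_mul (ω ^ 2)⁻¹)
  have hftc := integral_Ioi_of_hasDerivAt_of_tendsto' hderiv (hint₀.add hint₂) hlim₀
  rw [integral_add hint₀ hint₂, integral_const_mul] at hftc
  linarith

lemma abs_boundary_le (h : IsSymbolOfOrder α A f f' f'') (hc : 0 < c) (x : ℝ) :
    |c * (f c * Real.sin x) + c ^ 2 * (f' c * Real.cos x)| ≤ 2 * A * c ^ (α + 1) := by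
  have hsin : |f c * Real.sin x| ≤ A * c ^ α := by
    rw [abs_mul]
    exact (mul_le_of_le_one_right (abs_nonneg _) (Real.abs_sin_le_one x)).trans (h.abs_le c hc)
  have hcos : |f' c * Real.cos x| ≤ A * c ^ (α - 1) := by
    rw [abs_mul]
    exact (mul_le_of_le_one_right (abs_nonneg _) (Real.abs_cos_le_one x)).trans
      (h.abs_deriv_le c hc)
  calc _ ≤ c * |f c * Real.sin x| + c ^ 2 * |f' c * Real.cos x| := by
        refine (abs_add_le _ _).trans_eq ?_
        rw [abs_mul c, abs_mul (c ^ 2), abs_of_pos hc, abs_of_pos (pow_pos hc 2)]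
    _ ≤ c * (A * c ^ α) + c ^ 2 * (A * c ^ (α - 1)) := by gcongr
    _ = 2 * A * c ^ (α + 1) := by
        rw [Real.rpow_sub_one hc.ne', Real.rpow_add_one hc.ne']
        field_simp
        ring

/-- The symbol is estimated by its size on `(0, c]`, where the phase does not oscillate, and two
integrations by parts gain the factor `c ^ 2` on `(c, ∞)`. -/
lemma abs_integral_Ioi_mul_cos_le (h : IsSymbolOfOrder α A f f' f'') (hα₀ : -1 < α) (hα₁ : α < 1)
    (hint : IntegrableOn f (Ioi 0)) (hlim : Tendsto f atTop (𝓝 0)) (hc : 0 < c) :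
    |∫ θ in Ioi 0, f θ * Real.cos (c⁻¹ * θ)| ≤
      A * (1 / (α + 1) + 2 + 1 / (1 - α)) * c ^ (α + 1) := by
  have hint₀ : IntegrableOn (fun θ => f θ * Real.cos (c⁻¹ * θ)) (Ioi 0) :=
    hint.mul_bdd (c := 1) (by fun_prop) (ae_of_all _ fun θ => Real.abs_cos_le_one _)
  have htail := h.integral_Ioi_mul_cos_eq hα₁ hint hlim (inv_ne_zero hc.ne') hc
  rw [inv_inv, inv_pow, inv_inv] at htail
  have hgain : c ^ 2 * c ^ (α - 1) = c ^ (α + 1) := by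
    rw [← Real.rpow_natCast, ← Real.rpow_add hc]
    ring_nf
  rw [← Ioc_union_Ioi_eq_Ioi hc.le, setIntegral_union Ioc_disjoint_Ioi_same measurableSet_Ioi
    (hint₀.mono_set Ioc_subset_Ioi_self) (hint₀.mono_set (Ioi_subset_Ioi hc.le)), htail]
  set head := ∫ θ in Ioc 0 c, f θ * Real.cos (c⁻¹ * θ)
  set boundary := c * (f c * Real.sin (c⁻¹ * c)) + c ^ 2 * (f' c * Real.cos (c⁻¹ * c))
  set tail := ∫ θ in Ioi c, f'' θ * Real.cos (c⁻¹ * θ)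
  calc |head + (-boundary - c ^ 2 * tail)| ≤ |head| + |boundary| + c ^ 2 * |tail| := by
        rw [← abs_of_pos (pow_pos hc 2), ← abs_mul, ← abs_neg boundary, abs_of_pos (pow_pos hc 2),
          add_assoc]
        exact (abs_add_le _ _).trans (by gcongr; exact abs_sub _ _)
    _ ≤ A * (c ^ (α + 1) / (α + 1)) + 2 * A * c ^ (α + 1)
          + c ^ 2 * (A * (c ^ (α - 1) / (1 - α))) := by
        gcongr
        · exact h.abs_integral_Ioc_mul_cos_le hα₀ hc.le _
        · exact h.abs_boundary_le hc _
        · exact h.abs_integral_Ioi_deriv2_mul_cos_le hα₁ hc _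
    _ = A * (1 / (α + 1) + 2 + 1 / (1 - α)) * c ^ (α + 1) := by
        rw [← hgain]
        ring

end IsSymbolOfOrder

/-- The power-weighted Gaussian `θ ^ β * exp (-a * θ ^ 2)`, meant for `θ > 0`. Differentiation
stays in this family, lowering and raising `β`. -/
noncomputable def powGaussian (a β θ : ℝ) : ℝ := θ ^ β * Real.exp (-a * θ ^ 2)

lemma powGaussian_nonneg (a β : ℝ) {θ : ℝ} (hθ : 0 ≤ θ) : 0 ≤ powGaussian a β θ :=
  mul_nonneg (Real.rpow_nonneg hθ β) (Real.exp_pos _).le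

lemma hasDerivAt_powGaussian (a β : ℝ) {θ : ℝ} (hθ : 0 < θ) :
    HasDerivAt (powGaussian a β)
      (β * powGaussian a (β - 1) θ - 2 * (a * powGaussian a (β + 1) θ)) θ := by
  refine ((Real.hasDerivAt_rpow_const (.inl hθ.ne')).mul
    ((hasDerivAt_pow 2 θ).const_mul (-a)).exp).congr_deriv ?_
  simp only [powGaussian, Real.rpow_add_one hθ.ne']
  push_cast
  ring

open Nat in
lemma pow_mul_powGaussian_le {a : ℝ} (ha : 0 ≤ a) (β : ℝ) {θ : ℝ} (hθ : 0 < θ) (k : ℕ) :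
    a ^ k * powGaussian a (β + 2 * k) θ ≤ k ! * θ ^ β := by
  have hfact : (a * θ ^ 2) ^ k * Real.exp (-(a * θ ^ 2)) ≤ k ! := by
    rw [Real.exp_neg, ← div_eq_mul_inv, div_le_comm₀ (Real.exp_pos _) (by positivity)]
    exact Real.pow_div_factorial_le_exp _ (by positivity) k
  calc _ = (a * θ ^ 2) ^ k * Real.exp (-(a * θ ^ 2)) * θ ^ β := by
        rw [powGaussian, Real.rpow_add hθ, Real.rpow_mul hθ.le, Real.rpow_natCast, Real.rpow_two]
        ring_nf
    _ ≤ k ! * θ ^ β := by gcongr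

lemma abs_deriv_powGaussian_le (α : ℝ) {a θ : ℝ} (ha : 0 ≤ a) (hθ : 0 < θ) :
    |α * powGaussian a (α - 1) θ - 2 * (a * powGaussian a (α + 1) θ)| ≤
      (|α| + 2) * θ ^ (α - 1) := by
  have h₀ : powGaussian a (α - 1) θ ≤ θ ^ (α - 1) := by
    simpa using pow_mul_powGaussian_le ha (α - 1) hθ 0
  have h₁ : a * powGaussian a (α + 1) θ ≤ θ ^ (α - 1) := by
    simpa [show α - 1 + 2 = α + 1 by ring] using pow_mul_powGaussian_le ha (α - 1) hθ 1
  have hpos₀ := powGaussian_nonneg a (α - 1) hθ.le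
  have hpos₁ := mul_nonneg ha (powGaussian_nonneg a (α + 1) hθ.le)
  calc _ ≤ |α| * powGaussian a (α - 1) θ + 2 * (a * powGaussian a (α + 1) θ) := by
        refine (abs_sub _ _).trans_eq ?_
        rw [abs_mul, abs_of_nonneg hpos₀, abs_of_nonneg (mul_nonneg zero_le_two hpos₁)]
    _ ≤ |α| * θ ^ (α - 1) + 2 * θ ^ (α - 1) := by gcongr
    _ = (|α| + 2) * θ ^ (α - 1) := by ring

lemma abs_deriv2_powGaussian_le (α : ℝ) {a θ : ℝ} (ha : 0 ≤ a) (hθ : 0 < θ) :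
    |α * (α - 1) * powGaussian a (α - 2) θ - 2 * (2 * α + 1) * (a * powGaussian a α θ)
      + 4 * (a ^ 2 * powGaussian a (α + 2) θ)| ≤
      (|α * (α - 1)| + 2 * |2 * α + 1| + 8) * θ ^ (α - 2) := by
  have h₀ : powGaussian a (α - 2) θ ≤ θ ^ (α - 2) := by
    simpa using pow_mul_powGaussian_le ha (α - 2) hθ 0
  have h₁ : a * powGaussian a α θ ≤ θ ^ (α - 2) := by
    simpa using pow_mul_powGaussian_le ha (α - 2) hθ 1
  have h₂ : a ^ 2 * powGaussian a (α + 2) θ ≤ 2 * θ ^ (α - 2) := by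
    simpa [show α - 2 + 2 * 2 = α + 2 by ring] using pow_mul_powGaussian_le ha (α - 2) hθ 2
  have hpos₀ := powGaussian_nonneg a (α - 2) hθ.le
  have hpos₁ := mul_nonneg ha (powGaussian_nonneg a α hθ.le)
  have hpos₂ := mul_nonneg (sq_nonneg a) (powGaussian_nonneg a (α + 2) hθ.le)
  calc _ ≤ |α * (α - 1)| * powGaussian a (α - 2) θ + 2 * |2 * α + 1| * (a * powGaussian a α θ)
          + 4 * (a ^ 2 * powGaussian a (α + 2) θ) := by
        refine (abs_add_le _ _).trans ((add_le_add_left (abs_sub _ _) _).trans_eq ?_)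
        rw [abs_mul _ (powGaussian a (α - 2) θ), abs_mul _ (a * powGaussian a α θ), abs_mul 2,
          abs_two, abs_of_nonneg hpos₀, abs_of_nonneg hpos₁,
          abs_of_nonneg (mul_nonneg zero_le_four hpos₂)]
    _ ≤ |α * (α - 1)| * θ ^ (α - 2) + 2 * |2 * α + 1| * θ ^ (α - 2)
          + 4 * (2 * θ ^ (α - 2)) := by gcongr
    _ = (|α * (α - 1)| + 2 * |2 * α + 1| + 8) * θ ^ (α - 2) := by ring

/-- The constant is uniform in `a`: each factor `a` produced by a derivative comes with `θ ^ 2`. -/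
lemma isSymbolOfOrder_powGaussian (α : ℝ) {a : ℝ} (ha : 0 ≤ a) :
    IsSymbolOfOrder α (|α * (α - 1)| + 2 * |2 * α + 1| + |α| + 8) (powGaussian a α)
      (fun θ => α * powGaussian a (α - 1) θ - 2 * (a * powGaussian a (α + 1) θ))
      (fun θ => α * (α - 1) * powGaussian a (α - 2) θ
        - 2 * (2 * α + 1) * (a * powGaussian a α θ) + 4 * (a ^ 2 * powGaussian a (α + 2) θ)) where
  hasDerivAt θ hθ := hasDerivAt_powGaussian a α hθ
  hasDerivAt_deriv θ hθ := by
    refine (((hasDerivAt_powGaussian a (α - 1) hθ).const_mul α).sub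
      (((hasDerivAt_powGaussian a (α + 1) hθ).const_mul a).const_mul 2)).congr_deriv ?_
    ring_nf
  abs_le θ hθ := by
    have hle : powGaussian a α θ ≤ θ ^ α := by simpa using pow_mul_powGaussian_le ha α hθ 0
    rw [abs_of_nonneg (powGaussian_nonneg a α hθ.le)]
    exact hle.trans (le_mul_of_one_le_left (by positivity)
      (by linarith [abs_nonneg (α * (α - 1)), abs_nonneg (2 * α + 1), abs_nonneg α]))
  abs_deriv_le θ hθ := (abs_deriv_powGaussian_le α ha hθ).trans <|
    mul_le_mul_of_nonneg_right
      (by linarith [abs_nonneg (α * (α - 1)), abs_nonneg (2 * α + 1)]) (by positivity)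
  abs_deriv2_le θ hθ := (abs_deriv2_powGaussian_le α ha hθ).trans <|
    mul_le_mul_of_nonneg_right (by linarith [abs_nonneg α]) (by positivity)

lemma integrableOn_powGaussian {a β : ℝ} (ha : 0 < a) (hβ : -1 < β) :
    IntegrableOn (powGaussian a β) (Ioi 0) :=
  integrableOn_rpow_mul_exp_neg_mul_sq ha hβ

lemma tendsto_powGaussian_atTop_zero {a : ℝ} (ha : 0 < a) (β : ℝ) :
    Tendsto (powGaussian a β) atTop (𝓝 0) :=
  (rpow_mul_exp_neg_mul_sq_isLittleO_exp_neg ha β).trans_tendsto <|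
    Real.tendsto_exp_atBot.comp (tendsto_id.const_mul_atTop_of_neg (by norm_num))

lemma integral_powGaussian {a β : ℝ} (ha : 0 < a) (hβ : -1 < β) :
    ∫ θ in Ioi 0, powGaussian a β θ = √a ^ (-(β + 1)) * (Real.Gamma ((β + 1) / 2) / 2) := by
  have hgamma := integral_rpow_mul_exp_neg_mul_rpow two_pos hβ ha
  simp only [Real.rpow_two] at hgamma
  rw [Real.sqrt_eq_rpow, ← Real.rpow_mul ha.le]
  simp only [powGaussian, hgamma]
  ring_nf

lemma abs_integral_powGaussian_mul_cos_le {a β : ℝ} (ha : 0 < a) (hβ : -1 < β) (ω : ℝ) :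
    |∫ θ in Ioi 0, powGaussian a β θ * Real.cos (ω * θ)| ≤
      √a ^ (-(β + 1)) * (Real.Gamma ((β + 1) / 2) / 2) := by
  rw [← integral_powGaussian ha hβ, ← Real.norm_eq_abs]
  refine norm_integral_le_of_norm_le (integrableOn_powGaussian ha hβ)
    ((ae_restrict_mem measurableSet_Ioi).mono fun θ hθ => ?_)
  rw [norm_mul, Real.norm_of_nonneg (powGaussian_nonneg a β hθ.out.le)]
  exact mul_le_of_le_one_right (powGaussian_nonneg a β hθ.out.le) (Real.abs_cos_le_one _)

lemma exists_abs_integral_powGaussian_mul_cos_le {α : ℝ} (hα₀ : -1 < α) (hα₁ : α < 1) :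
    ∃ K > 0, ∀ a > 0, ∀ ω ≥ 0, |∫ θ in Ioi 0, powGaussian a α θ * Real.cos (ω * θ)| ≤
      K * (√a + ω) ^ (-(α + 1)) := by
  set G := Real.Gamma ((α + 1) / 2) / 2
  set B := (|α * (α - 1)| + 2 * |2 * α + 1| + |α| + 8) * (1 / (α + 1) + 2 + 1 / (1 - α))
  have hα : 0 < α + 1 := by linarith
  have : 0 < 1 - α := by linarith
  have : 0 < G := half_pos (Real.Gamma_pos_of_pos (half_pos hα))
  refine ⟨2 ^ (α + 1) * (G + B), by positivity, fun a ha ω hω => ?_⟩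
  set I := |∫ θ in Ioi 0, powGaussian a α θ * Real.cos (ω * θ)|
  have hsize : √a ^ (α + 1) * I ≤ G := by
    have h := abs_integral_powGaussian_mul_cos_le ha hα₀ ω
    rwa [Real.rpow_neg (Real.sqrt_nonneg a), ← div_eq_inv_mul, le_div_iff₀' (by positivity)] at h
  have hoscillation : ω ^ (α + 1) * I ≤ B := by
    obtain rfl | hω := hω.eq_or_lt
    · rw [Real.zero_rpow hα.ne', zero_mul]
      positivity
    · have h := (isSymbolOfOrder_powGaussian α ha.le).abs_integral_Ioi_mul_cos_le hα₀ hα₁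
        (integrableOn_powGaussian ha hα₀) (tendsto_powGaussian_atTop_zero ha α) (inv_pos.2 hω)
      rwa [inv_inv, Real.inv_rpow hω.le, ← div_eq_mul_inv, le_div_iff₀' (by positivity)] at h
  rw [Real.rpow_neg (by positivity), ← div_eq_mul_inv, le_div_iff₀' (by positivity)]
  calc (√a + ω) ^ (α + 1) * I ≤ 2 ^ (α + 1) * (√a ^ (α + 1) + ω ^ (α + 1)) * I := by
        gcongr
        exact add_rpow_le_two_rpow_mul_rpow_add_rpow (Real.sqrt_nonneg a) hω hα.le
    _ = 2 ^ (α + 1) * (√a ^ (α + 1) * I + ω ^ (α + 1) * I) := by ring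
    _ ≤ 2 ^ (α + 1) * (G + B) := by gcongr

lemma one_add_norm_le_mul {E : Type*} [SeminormedAddCommGroup E] (y z : E) :
    1 + ‖y‖ ≤ (1 + ‖z‖) * (1 + ‖y - z‖) := by
  nlinarith [norm_le_insert' y z, norm_nonneg z, norm_nonneg (y - z),
    mul_nonneg (norm_nonneg z) (norm_nonneg (y - z))]

lemma one_add_norm_rpow_neg_le {E : Type*} [NormedAddCommGroup E] {p : ℝ} (hp : 0 ≤ p) (x : E) :
    (1 + ‖x‖) ^ (-p) ≤ (1 + ‖x‖ ^ 2) ^ (-p / 2) := by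
  rw [Real.rpow_div_two_eq_sqrt _ (by positivity)]
  exact Real.rpow_le_rpow_of_nonpos (by positivity) (sqrt_one_add_norm_sq_le x)
    (neg_nonpos.2 hp)

lemma one_add_rpow_le_mul_exp {p b x : ℝ} (hp : 0 < p) (hb : 0 < b) (hx : 0 ≤ x) :
    (1 + x) ^ p ≤ max 1 (p / b) ^ p * Real.exp (b * x) := by
  have hlin : 1 + x ≤ max 1 (p / b) * Real.exp (b / p * x) :=
    calc 1 + x = 1 * 1 + p / b * (b / p * x) := by field_simp
      _ ≤ max 1 (p / b) * 1 + max 1 (p / b) * (b / p * x) := by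
          gcongr
          exacts [le_max_left _ _, le_max_right _ _]
      _ = max 1 (p / b) * (b / p * x + 1) := by ring
      _ ≤ max 1 (p / b) * Real.exp (b / p * x) := by
          gcongr
          exact Real.add_one_le_exp _
  calc (1 + x) ^ p ≤ (max 1 (p / b) * Real.exp (b / p * x)) ^ p := by gcongr
    _ = max 1 (p / b) ^ p * Real.exp (b * x) := by
        rw [Real.mul_rpow (by positivity) (by positivity), ← Real.exp_mul]
        congr 2
        field_simp

lemma one_add_rpow_mul_rpow_neg_le {p x : ℝ} (hx : 0 < x) (hp : 0 ≤ p) :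
    (1 + x) ^ p * x ^ (-p) ≤ 2 ^ p * (1 + x ^ (-p)) := by
  calc _ ≤ 2 ^ p * (1 ^ p + x ^ p) * x ^ (-p) := by
        gcongr
        exact add_rpow_le_two_rpow_mul_rpow_add_rpow zero_le_one hx.le hp
    _ = 2 ^ p * (x ^ p * x ^ (-p) + x ^ (-p)) := by rw [Real.one_rpow]; ring
    _ = _ := by rw [← Real.rpow_add hx, add_neg_cancel, Real.rpow_zero]

lemma integrable_exp_neg_mul_abs {b : ℝ} (hb : 0 < b) :
    Integrable fun z : ℝ => Real.exp (-b * |z|) :=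
  integrable_comp_abs (f := fun z => Real.exp (-b * z))
    (integrableOn_exp_mul_Ioi (neg_lt_zero.2 hb) 0)

lemma integral_exp_neg_mul_abs {b : ℝ} (hb : 0 < b) :
    ∫ z : ℝ, Real.exp (-b * |z|) = 2 / b := by
  rw [integral_comp_abs (f := fun z => Real.exp (-b * z)),
    integral_exp_mul_Ioi (neg_lt_zero.2 hb), mul_zero, Real.exp_zero, neg_div_neg_eq, mul_one_div]

section AddAbsRpow

variable {r p : ℝ}

lemma integrable_add_abs_rpow_neg (hr : 0 < r) (hp : 1 < p) :
    Integrable fun w : ℝ => (r + |w|) ^ (-p) := by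
  refine integrable_comp_abs (f := fun w => (r + w) ^ (-p)) ?_
  simpa only [add_comm r] using
    integrableOn_add_rpow_Ioi_of_lt (neg_lt_neg hp) (neg_lt_zero.2 hr)

lemma integral_add_abs_rpow_neg (hr : 0 < r) (hp : 1 < p) :
    ∫ w : ℝ, (r + |w|) ^ (-p) = 2 * (r ^ (1 - p) / (p - 1)) := by
  have hshift := (measurePreserving_add_left volume r).setIntegral_preimage_emb
    (measurableEmbedding_addLeft r) (fun w => w ^ (-p)) (Ioi r)
  rw [preimage_const_add_Ioi, sub_self, integral_Ioi_rpow_of_lt (neg_lt_neg hp) hr] at hshift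
  rw [integral_comp_abs (f := fun w => (r + w) ^ (-p)), hshift, neg_div, ← div_neg]
  ring_nf

lemma integrable_exp_mul_add_abs_rpow_neg {b : ℝ} (hb : 0 ≤ b) (hr : 0 < r) (hp : 1 < p) (y : ℝ) :
    Integrable fun z : ℝ => Real.exp (-b * |z|) * (r + |y - z|) ^ (-p) :=
  ((integrable_add_abs_rpow_neg hr hp).comp_sub_left y).bdd_mul (c := 1) (by fun_prop) <|
    ae_of_all _ fun z => by
      rw [Real.norm_of_nonneg (by positivity), Real.exp_le_one_iff, neg_mul]
      exact neg_nonpos.2 (mul_nonneg hb (abs_nonneg z))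

-- `1 + |y| ≤ (1 + |z|) (1 + |y - z|)` moves the weight onto the two factors; the exponential
-- absorbs the first one and `1 + |w| ≤ 1 + (r + |w|)` the second.
lemma one_add_abs_rpow_mul_exp_mul_le {b : ℝ} (hb : 0 < b) (hr : 0 < r) (hp : 0 < p) (y z : ℝ) :
    (1 + |y|) ^ p * (Real.exp (-b * |z|) * (r + |y - z|) ^ (-p)) ≤
      max 1 (p / (b / 2)) ^ p * 2 ^ p * (Real.exp (-(b / 2) * |z|) + (r + |y - z|) ^ (-p)) := by
  set ρ := r + |y - z|
  have hρ₀ : 0 < ρ := by positivity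
  have hpeetre : (1 + |y|) ^ p ≤ (1 + |z|) ^ p * (1 + ρ) ^ p := by
    rw [← Real.mul_rpow (by positivity) (by positivity)]
    gcongr
    refine (one_add_norm_le_mul y z).trans ?_
    rw [Real.norm_eq_abs, Real.norm_eq_abs]
    gcongr
    exact le_add_of_nonneg_left hr.le
  have hexp : (1 + |z|) ^ p * Real.exp (-b * |z|) ≤
      max 1 (p / (b / 2)) ^ p * Real.exp (-(b / 2) * |z|) := by
    calc _ ≤ max 1 (p / (b / 2)) ^ p * Real.exp (b / 2 * |z|) * Real.exp (-b * |z|) := by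
          gcongr
          exact one_add_rpow_le_mul_exp hp (half_pos hb) (abs_nonneg z)
      _ = _ := by
          rw [mul_assoc, ← Real.exp_add]
          ring_nf
  have hexp_le_one : Real.exp (-(b / 2) * |z|) ≤ 1 := by
    rw [Real.exp_le_one_iff, neg_mul]
    exact neg_nonpos.2 (by positivity)
  calc _ ≤ (1 + |z|) ^ p * (1 + ρ) ^ p * (Real.exp (-b * |z|) * ρ ^ (-p)) := by gcongr
    _ = (1 + |z|) ^ p * Real.exp (-b * |z|) * ((1 + ρ) ^ p * ρ ^ (-p)) := by ring
    _ ≤ max 1 (p / (b / 2)) ^ p * Real.exp (-(b / 2) * |z|) * (2 ^ p * (1 + ρ ^ (-p))) := by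
        gcongr ?_ * ?_
        exact one_add_rpow_mul_rpow_neg_le hρ₀ hp.le
    _ = max 1 (p / (b / 2)) ^ p * 2 ^ p *
          (Real.exp (-(b / 2) * |z|) + Real.exp (-(b / 2) * |z|) * ρ ^ (-p)) := by ring
    _ ≤ _ := by
        gcongr
        exact mul_le_of_le_one_left (by positivity) hexp_le_one

lemma exists_integral_exp_mul_add_abs_rpow_neg_le {b : ℝ} (hb : 0 < b) (hp : 1 < p) :
    ∃ M > 0, ∀ r > 0, ∀ y : ℝ, ∫ z : ℝ, Real.exp (-b * |z|) * (r + |y - z|) ^ (-p) ≤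
      M * (1 + r ^ (1 - p)) * (1 + |y|) ^ (-p) := by
  have hp₀ : 0 < p := by linarith
  have : 0 < p - 1 := by linarith
  set N := max 1 (p / (b / 2)) ^ p * 2 ^ p
  refine ⟨N * (2 / (b / 2) + 2 / (p - 1)), by positivity, fun r hr y => ?_⟩
  have hexp := integrable_exp_neg_mul_abs (half_pos hb)
  have hkernel := (integrable_add_abs_rpow_neg hr hp).comp_sub_left y
  rw [Real.rpow_neg (by positivity), ← div_eq_mul_inv, le_div_iff₀' (by positivity),
    ← integral_const_mul]
  calc _ ≤ ∫ z, N * (Real.exp (-(b / 2) * |z|) + (r + |y - z|) ^ (-p)) :=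
        integral_mono ((integrable_exp_mul_add_abs_rpow_neg hb.le hr hp y).const_mul _)
          ((hexp.add hkernel).const_mul N) (one_add_abs_rpow_mul_exp_mul_le hb hr hp₀ y)
    _ = N * (2 / (b / 2) * 1 + 2 / (p - 1) * r ^ (1 - p)) := by
        rw [integral_const_mul, integral_add hexp hkernel, integral_exp_neg_mul_abs (half_pos hb),
          integral_sub_left_eq_self (fun w => (r + |w|) ^ (-p)) volume y,
          integral_add_abs_rpow_neg hr hp]
        ring
    _ ≤ N * ((2 / (b / 2) + 2 / (p - 1)) * 1 + (2 / (b / 2) + 2 / (p - 1)) * r ^ (1 - p)) := by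
        gcongr
        · exact le_add_of_nonneg_right (by positivity)
        · exact le_add_of_nonneg_left (by positivity)
    _ = _ := by ring

end AddAbsRpow

lemma sqrtDheat_eq_integral_Ioi {s : ℝ} (hs : 0 < s) (x : ℝ) :
    sqrtDheat s x = 2 * ∫ θ in Ioi 0,
      powGaussian (4 * Real.pi ^ 2 * s) (1 / 2) θ * Real.cos (2 * Real.pi * |x| * θ) := by
  rw [← integral_comp_abs (f := fun θ =>
    powGaussian (4 * Real.pi ^ 2 * s) (1 / 2) θ * Real.cos (2 * Real.pi * |x| * θ)), sqrtDheat]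
  have hint : Integrable fun θ : ℝ =>
      ((|θ| ^ ((1:ℝ)/2) * Real.exp (-4 * Real.pi ^ 2 * s * θ ^ 2) : ℝ) : ℂ) *
      Complex.exp ((2 * Real.pi * x * θ : ℝ) * Complex.I) := by
    refine (integrable_comp_abs (integrableOn_powGaussian (a := 4 * Real.pi ^ 2 * s) (β := 1 / 2)
      (by positivity) (by norm_num))).mono' (by fun_prop) (ae_of_all _ fun θ => ?_)
    rw [norm_mul, Complex.norm_exp_ofReal_mul_I, mul_one, Complex.norm_real,
      Real.norm_of_nonneg (by positivity), powGaussian, sq_abs]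
    simp only [neg_mul, le_refl]
  rw [← RCLike.re_eq_complex_re, ← integral_re hint]
  congr 1 with θ
  have hcos : Real.cos (2 * Real.pi * |x| * |θ|) = Real.cos (2 * Real.pi * x * θ) := by
    rw [← Real.cos_abs (2 * Real.pi * x * θ), abs_mul, abs_mul, abs_of_pos Real.two_pi_pos]
  rw [RCLike.re_eq_complex_re, Complex.re_ofReal_mul, Complex.exp_ofReal_mul_I_re, hcos,
    powGaussian, sq_abs]
  simp only [neg_mul]

lemma exists_sq_sqrtDheat_le :
    ∃ K > 0, ∀ s > 0, ∀ x, sqrtDheat s x ^ 2 ≤ K * (√s + |x|) ^ (-3 : ℝ) := by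
  obtain ⟨K, hK, hbound⟩ := exists_abs_integral_powGaussian_mul_cos_le (α := 1 / 2)
    (by norm_num) (by norm_num)
  refine ⟨(2 * K) ^ 2, by positivity, fun s hs x => ?_⟩
  have hρ : 0 < √s + |x| := by positivity
  have hscale : √(4 * Real.pi ^ 2 * s) + 2 * Real.pi * |x| = 2 * Real.pi * (√s + |x|) := by
    rw [show 4 * Real.pi ^ 2 * s = (2 * Real.pi) ^ 2 * s by ring, Real.sqrt_mul (by positivity),
      Real.sqrt_sq Real.two_pi_pos.le, mul_add]
  have habs : |sqrtDheat s x| ≤ 2 * K * (√s + |x|) ^ (-(3 / 2) : ℝ) := by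
    calc |sqrtDheat s x| ≤ 2 * (K * (2 * Real.pi * (√s + |x|)) ^ (-(1 / 2 + 1) : ℝ)) := by
          rw [sqrtDheat_eq_integral_Ioi hs, abs_mul, abs_two, ← hscale]
          gcongr
          exact hbound _ (by positivity) _ (by positivity)
      _ ≤ 2 * (K * (√s + |x|) ^ (-(1 / 2 + 1) : ℝ)) := by
          gcongr 2 * (K * ?_)
          exact Real.rpow_le_rpow_of_nonpos hρ
            (le_mul_of_one_le_left hρ.le (by linarith [Real.pi_gt_three])) (by norm_num)
      _ = 2 * K * (√s + |x|) ^ (-(3 / 2) : ℝ) := by norm_num [mul_assoc]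
  calc sqrtDheat s x ^ 2 = |sqrtDheat s x| ^ 2 := (sq_abs _).symm
    _ ≤ (2 * K * (√s + |x|) ^ (-(3 / 2) : ℝ)) ^ 2 := by gcongr
    _ = (2 * K) ^ 2 * (√s + |x|) ^ (-3 : ℝ) := by
        rw [mul_pow, ← Real.rpow_mul_natCast hρ.le]
        norm_num

lemma exists_integral_exp_mul_sq_sqrtDheat_le {lam : ℝ} (hlam : 0 < lam) :
    ∃ K > 0, ∀ t > 0, ∀ y,
      ∫ z, Real.exp (-lam * |z|) * sqrtDheat t (y - z) ^ 2 ≤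
        K * (1 + y ^ 2) ^ (-(3 : ℝ) / 2) * (1 + 1 / t) := by
  obtain ⟨K, hK, hheat⟩ := exists_sq_sqrtDheat_le
  obtain ⟨M, hM, hweight⟩ :=
    exists_integral_exp_mul_add_abs_rpow_neg_le hlam (p := 3) (by norm_num)
  refine ⟨K * M, by positivity, fun t ht y => ?_⟩
  have ht' : 0 < √t := Real.sqrt_pos.2 ht
  have htime : √t ^ (1 - 3 : ℝ) = 1 / t := by
    rw [show (1 - 3 : ℝ) = -(2 : ℕ) by norm_num, Real.rpow_neg ht'.le, Real.rpow_natCast,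
      Real.sq_sqrt ht.le, one_div]
  have hbracket : (1 + |y|) ^ (-3 : ℝ) ≤ (1 + y ^ 2) ^ (-(3 : ℝ) / 2) := by
    simpa only [Real.norm_eq_abs, sq_abs] using one_add_norm_rpow_neg_le (p := 3) (by norm_num) y
  calc _ ≤ ∫ z, K * (Real.exp (-lam * |z|) * (√t + |y - z|) ^ (-3 : ℝ)) := by
        refine integral_mono_of_nonneg (ae_of_all _ fun z => by positivity)
          ((integrable_exp_mul_add_abs_rpow_neg hlam.le ht' (by norm_num) y).const_mul K)
          (ae_of_all _ fun z => ?_)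
        exact (mul_le_mul_of_nonneg_left (hheat t ht (y - z)) (Real.exp_pos _).le).trans_eq
          (mul_left_comm _ _ _)
    _ ≤ K * (M * (1 + √t ^ (1 - 3 : ℝ)) * (1 + |y|) ^ (-3 : ℝ)) := by
        rw [integral_const_mul]
        gcongr
        exact hweight _ ht' y
    _ ≤ K * (M * (1 + 1 / t) * (1 + y ^ 2) ^ (-(3 : ℝ) / 2)) := by rw [htime]; gcongr
    _ = _ := by ring

lemma intervalIntegrable_one_div_add {ε T : ℝ} (hε : 0 < ε) (hT : 0 ≤ T) :
    IntervalIntegrable (fun s => 1 / (s + ε)) volume 0 T := by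
  refine intervalIntegral.intervalIntegrable_one_div (fun s hs => ?_) (by fun_prop)
  rw [uIcc_of_le hT] at hs
  linarith [hs.1]

lemma integral_one_div_add {ε T : ℝ} (hε : 0 < ε) (hT : 0 ≤ T) :
    ∫ s in (0 : ℝ)..T, 1 / (s + ε) = Real.log ((T + ε) / ε) := by
  rw [intervalIntegral.integral_comp_add_right (fun s => 1 / s), zero_add,
    integral_one_div_of_pos hε (by positivity)]

lemma one_add_log_one_add_sq_div_sq_le {δ : ℝ} (hδ : δ ∈ Ioc (0 : ℝ) (1 / 2)) :
    1 + Real.log ((1 + δ ^ 2) / δ ^ 2) ≤ 5 * Real.log (1 / δ) := by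
  obtain ⟨hδ₀, hδ₁⟩ := hδ
  have hlog : Real.log ((1 + δ ^ 2) / δ ^ 2) ≤ 3 * Real.log (1 / δ) := by
    calc _ ≤ Real.log ((1 / δ) ^ 3) := by
          gcongr
          rw [div_pow, one_pow, div_le_div_iff₀ (by positivity) (by positivity)]
          nlinarith [show (1 + δ ^ 2) * δ ≤ 1 by nlinarith]
      _ = 3 * Real.log (1 / δ) := by rw [Real.log_pow, Nat.cast_ofNat]
  have htwo : Real.log 2 ≤ Real.log (1 / δ) := by
    gcongr
    rw [le_div_iff₀ hδ₀]
    linarith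
  linarith [Real.log_two_gt_d9]

lemma integral_one_add_one_div_add_sq_le {δ : ℝ} (hδ : δ ∈ Ioc (0 : ℝ) (1 / 2)) :
    ∫ s in (0 : ℝ)..1, (1 + 1 / (s + δ ^ 2)) ≤ 5 * Real.log (1 / δ) := by
  have hδ₂ : 0 < δ ^ 2 := pow_pos hδ.1 2
  rw [intervalIntegral.integral_add intervalIntegrable_const
    (intervalIntegrable_one_div_add hδ₂ zero_le_one), integral_one_div_add hδ₂ zero_le_one,
    intervalIntegral.integral_const, sub_zero, one_smul]
  exact one_add_log_one_add_sq_div_sq_le hδ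

/-- Weighted space-time square bound with logarithmic divergence:
`∫_0^1 ∫ e^{−λ|z|} |(√𝔇 q_{s+δ²})(y−z)|² dz ds ≲ log(1/δ) ⟨y⟩^{−3}`. -/
theorem stmt_15 (lam : ℝ) (hlam : 0 < lam) :
    ∃ C > (0:ℝ), ∀ δ ∈ Set.Ioc (0:ℝ) (1/2), ∀ y : ℝ,
      (∫ s in (0:ℝ)..1, ∫ z : ℝ, Real.exp (-lam * |z|) * (sqrtDheat (s + δ ^ 2) (y - z)) ^ 2)
        ≤ C * Real.log (1 / δ) * (1 + y ^ 2) ^ (-(3:ℝ)/2) := by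
  obtain ⟨K, hK, hspace⟩ := exists_integral_exp_mul_sq_sqrtDheat_le hlam
  refine ⟨K * 5, by positivity, fun δ hδ y => ?_⟩
  have hδ₂ : 0 < δ ^ 2 := pow_pos hδ.1 2
  set Q := (1 + y ^ 2) ^ (-(3:ℝ)/2)
  have : 0 < Q := by positivity
  calc _ ≤ ∫ s in (0:ℝ)..1, K * Q * (1 + 1 / (s + δ ^ 2)) := by
        rw [intervalIntegral.integral_of_le zero_le_one,
          intervalIntegral.integral_of_le zero_le_one]
        refine integral_mono_of_nonneg
          (ae_of_all _ fun s => integral_nonneg fun z => by positivity)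
          ((intervalIntegrable_const.add
            (intervalIntegrable_one_div_add hδ₂ zero_le_one)).const_mul (K * Q)).1
          ((ae_restrict_mem measurableSet_Ioc).mono fun s hs => ?_)
        exact hspace _ (add_pos hs.1 hδ₂) y
    _ ≤ K * Q * (5 * Real.log (1 / δ)) := by
        rw [intervalIntegral.integral_const_mul]
        gcongr
        exact integral_one_add_one_div_add_sq_le hδ
    _ = K * 5 * Real.log (1 / δ) * Q := by ring
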